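/- Let m₁, m₂ ≥ 1 be integers, p ∈ [1, ∞], α > 0, and let f : (0,∞) → [0,∞) be measurable, vanishing outside (0, α], and satisfying ∫₀^{α} f(t) Φ(iρ_p, t) Δ(t) dt < ∞. Then for every λ ∈ ℝ, | ∫₀^{α} f(t) Φ(λ + iρ_p, t) Δ(t) dt | ≥ ∫₀^{α} f(t) Ψ_p(λ, t) Δ(t) dt, where Ψ_p(λ, t) = (c₀ sinh(2t)/Δ(t)) ∫₀^{t} (cosh 2t − cosh 2s)^{m₂/2−1} ( ∫₀^{s} (cosh s − cosh r)^{m₁/2−1} cos(λ r) cosh(ρ_p r) dr ) sinh s ds. -/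

import Mathlib

open Set intervalIntegral MeasureTheory

/-- The density `Δ(t) = (2 sinh t)^{m₁+m₂} (2 cosh t)^{m₂}`. -/
noncomputable def Δ (m₁ m₂ : ℕ) (t : ℝ) : ℝ :=
  (2 * Real.sinh t) ^ (m₁ + m₂) * (2 * Real.cosh t) ^ m₂

/-- The constant `c₀ = √π 2^{m₂/2-2} Γ((n-1)/2)/Γ(n/2)`, `n = m₁+m₂+1`. -/
noncomputable def c₀ (m₁ m₂ : ℕ) : ℝ :=
  Real.sqrt Real.pi * 2 ^ ((m₂ : ℝ)/2 - 2) *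
    Real.Gamma (((m₁ : ℝ) + m₂ + 1 - 1)/2) / Real.Gamma (((m₁ : ℝ) + m₂ + 1)/2)

/-- The half-sum of positive roots `ρ = (m₁ + 2m₂)/2`. -/
noncomputable def ρ₀ (m₁ m₂ : ℕ) : ℝ := ((m₁ : ℝ) + 2 * m₂) / 2

/-- `ρ_p = (2/p - 1) ρ` for `p ∈ [1,∞]` (for `p = ∞` this is `-ρ`). -/
noncomputable def rhoP (m₁ m₂ : ℕ) (p : ENNReal) : ℝ := (2 / p.toReal - 1) * ρ₀ m₁ m₂

/-- The Koornwinder integral representation of the elementary spherical function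
`φ_z(a_t)`, `z ∈ ℂ`. -/
noncomputable def PhiC (m₁ m₂ : ℕ) (z : ℂ) (t : ℝ) : ℂ :=
  ((c₀ m₁ m₂ * Real.sinh (2*t) / Δ m₁ m₂ t : ℝ) : ℂ) *
    ∫ s in (0:ℝ)..t,
      (((Real.cosh (2*t) - Real.cosh (2*s)) ^ ((m₂ : ℝ)/2 - 1) : ℝ) : ℂ) *
      (∫ r in (0:ℝ)..s,
        (((Real.cosh s - Real.cosh r) ^ ((m₁ : ℝ)/2 - 1) : ℝ) : ℂ) * Complex.cos (z * r)) *
      ((Real.sinh s : ℝ) : ℂ)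

/-- The kernel `Ψ_p(λ,t)`, i.e. the "cosine part" of `Φ(λ + iρ_p, t)`. -/
noncomputable def Psi (m₁ m₂ : ℕ) (p : ENNReal) (lam t : ℝ) : ℝ :=
  (c₀ m₁ m₂ * Real.sinh (2*t) / Δ m₁ m₂ t) *
    ∫ s in (0:ℝ)..t, (Real.cosh (2*t) - Real.cosh (2*s)) ^ ((m₂ : ℝ)/2 - 1) *
      (∫ r in (0:ℝ)..s, (Real.cosh s - Real.cosh r) ^ ((m₁ : ℝ)/2 - 1) *
        (Real.cos (lam * r) * Real.cosh (rhoP m₁ m₂ p * r))) *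
      Real.sinh s


/-!
The cosine satisfies `Re cos z = cos (Re z) cosh (Im z)` and `|cos z| ≤ cosh (Im z)`. The
Koornwinder formula applies to `r ↦ cos (z r)` a linear transform with a positive kernel, so both
facts pass to the spherical functions: `Re Φ(λ + iσ, t)` is the transform of `cos (λ r) cosh (σ r)`,
which for `σ = ρ_p` is `Ψ_p(λ, t)`, and `|Φ(λ + iσ, t)| ≤ Φ(iσ, t)`. By the second fact
`f Φ(λ + iσ, ·) Δ` is integrable, and the claim is `Re ∫ ≤ |∫|`. The analytic point is the
convergence of the iterated integral: for `0 ≤ r < s` the difference `cosh s - cosh r` lies between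
`sinh (s / 2) (s - r)` and `sinh s (s - r)`, so its powers with exponent greater than `-1` are
integrable in `r`, and after multiplication by `sinh s` these integrals stay bounded as `s → 0`.
-/

theorem stronglyMeasurable_intervalIntegral_zero_left {E : Type*} [NormedAddCommGroup E]
    [NormedSpace ℝ E] {F : ℝ → ℝ → E} (hF : StronglyMeasurable (Function.uncurry F)) :
    StronglyMeasurable fun t => ∫ s in (0 : ℝ)..t, F t s := by
  -- Rescaling to `[0, 1]` makes the limits of integration independent of the parameter.
  have h_rescale (t : ℝ) : ∫ s in (0 : ℝ)..t, F t s = t • ∫ u in Ioc (0 : ℝ) 1, F t (t * u) := by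
    rw [← integral_of_le zero_le_one, smul_integral_comp_mul_left, mul_zero, mul_one]
  have h_meas : Measurable fun q : ℝ × ℝ => (q.1, q.1 * q.2) := by fun_prop
  simp_rw [h_rescale]
  exact stronglyMeasurable_id.smul (hF.comp_measurable h_meas).integral_prod_right'

theorem norm_cos_le_cosh_im (z : ℂ) : ‖Complex.cos z‖ ≤ Real.cosh z.im := by
  have h_add := norm_add_le (Complex.exp (z * Complex.I)) (Complex.exp (-z * Complex.I))
  have h_re : (z * Complex.I).re = -z.im ∧ (-z * Complex.I).re = z.im := by simp
  rw [Complex.norm_exp, Complex.norm_exp, h_re.1, h_re.2] at h_add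
  rw [Complex.cos, Real.cosh_eq, norm_div, Complex.norm_ofNat]
  linarith

theorem re_cos_eq_cos_re_mul_cosh_im (z : ℂ) :
    (Complex.cos z).re = Real.cos z.re * Real.cosh z.im := by
  rw [Complex.cos_eq, ← Complex.ofReal_cos, ← Complex.ofReal_cosh, ← Complex.ofReal_sin,
    ← Complex.ofReal_sinh, Complex.sub_re, Complex.re_ofReal_mul, Complex.ofReal_re,
    ← Complex.ofReal_mul, Complex.re_ofReal_mul, Complex.I_re, mul_zero, sub_zero]

theorem cosh_sub_cosh_nonneg {r s : ℝ} (hr : 0 ≤ r) (hrs : r ≤ s) :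
    0 ≤ Real.cosh s - Real.cosh r :=
  sub_nonneg.2 (Real.cosh_le_cosh.2 (abs_le_abs_of_nonneg hr hrs))

theorem cosh_sub_cosh_le_sinh_mul_sub {r s : ℝ} (hrs : r ≤ s) :
    Real.cosh s - Real.cosh r ≤ Real.sinh s * (s - r) := by
  refine (convex_Iic s).image_sub_le_mul_sub_of_deriv_le Real.continuous_cosh.continuousOn
    Real.differentiable_cosh.differentiableOn (fun x hx => ?_) r hrs s self_mem_Iic hrs
  rw [Real.deriv_cosh]
  exact Real.sinh_le_sinh.2 (interior_subset (s := Iic s) hx)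

theorem cosh_sub_cosh_eq_two_mul_sinh_mul_sinh (r s : ℝ) :
    Real.cosh s - Real.cosh r = 2 * Real.sinh ((s + r) / 2) * Real.sinh ((s - r) / 2) := by
  have hs := Real.cosh_add ((s + r) / 2) ((s - r) / 2)
  have hr := Real.cosh_sub ((s + r) / 2) ((s - r) / 2)
  rw [show (s + r) / 2 + (s - r) / 2 = s by ring] at hs
  rw [show (s + r) / 2 - (s - r) / 2 = r by ring] at hr
  rw [hs, hr]
  ring

theorem sinh_half_mul_sub_le_cosh_sub_cosh {r s : ℝ} (hr : 0 ≤ r) (hrs : r ≤ s) :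
    Real.sinh (s / 2) * (s - r) ≤ Real.cosh s - Real.cosh r := by
  have h_sub : 0 ≤ (s - r) / 2 := by linarith
  have h_sinh : 0 ≤ Real.sinh ((s + r) / 2) := Real.sinh_nonneg_iff.2 (by linarith)
  calc Real.sinh (s / 2) * (s - r) = 2 * Real.sinh (s / 2) * ((s - r) / 2) := by ring
    _ ≤ 2 * Real.sinh ((s + r) / 2) * Real.sinh ((s - r) / 2) := by
        gcongr
        · exact Real.sinh_le_sinh.2 (by linarith)
        · exact Real.self_le_sinh_iff.2 h_sub
    _ = Real.cosh s - Real.cosh r := (cosh_sub_cosh_eq_two_mul_sinh_mul_sinh r s).symm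

/-- The kernel `(cosh s - cosh r) ^ a` of the Abel-type transforms occurring in the Koornwinder
formula. It is meaningful only for `0 ≤ r ≤ s`. -/
noncomputable def coshKernel (a s r : ℝ) : ℝ :=
  (Real.cosh s - Real.cosh r) ^ a

@[fun_prop]
theorem measurable_coshKernel_comp {X : Type*} [MeasurableSpace X] (a : ℝ) {u v : X → ℝ}
    (hu : Measurable u) (hv : Measurable v) : Measurable fun x => coshKernel a (u x) (v x) := by
  unfold coshKernel
  fun_prop

theorem coshKernel_nonneg (a : ℝ) {r s : ℝ} (hr : 0 ≤ r) (hrs : r ≤ s) : 0 ≤ coshKernel a s r :=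
  Real.rpow_nonneg (cosh_sub_cosh_nonneg hr hrs) a

theorem sinh_mul_coshKernel_le_of_nonneg {a r s : ℝ} (ha : 0 ≤ a) (hr : 0 ≤ r) (hrs : r ≤ s) :
    Real.sinh s * coshKernel a s r ≤ Real.sinh s ^ (a + 1) * (s - r) ^ a := by
  have h_sub : 0 ≤ s - r := sub_nonneg.2 hrs
  have h_sinh : 0 ≤ Real.sinh s := Real.sinh_nonneg_iff.2 (hr.trans hrs)
  calc Real.sinh s * coshKernel a s r ≤ Real.sinh s * (Real.sinh s * (s - r)) ^ a := by
        unfold coshKernel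
        gcongr
        · exact cosh_sub_cosh_nonneg hr hrs
        · exact cosh_sub_cosh_le_sinh_mul_sub hrs
    _ = Real.sinh s ^ (a + 1) * (s - r) ^ a := by
        rw [Real.mul_rpow h_sinh h_sub, Real.rpow_add_one' h_sinh (by positivity)]
        ring

theorem sinh_mul_coshKernel_le_of_neg {a r s : ℝ} (ha : a < 0) (hr : 0 ≤ r) (hrs : r < s) :
    Real.sinh s * coshKernel a s r
      ≤ 2 * Real.cosh (s / 2) * Real.sinh (s / 2) ^ (a + 1) * (s - r) ^ a := by
  have h_sub : 0 < s - r := sub_pos.2 hrs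
  have hs : 0 < s := hr.trans_lt hrs
  have h_sinh : 0 ≤ Real.sinh s := Real.sinh_nonneg_iff.2 hs.le
  have h_sinh_half : 0 < Real.sinh (s / 2) := Real.sinh_pos_iff.2 (half_pos hs)
  have h_double : Real.sinh s = 2 * Real.sinh (s / 2) * Real.cosh (s / 2) := by
    rw [← Real.sinh_two_mul, mul_div_cancel₀ s two_ne_zero]
  calc Real.sinh s * coshKernel a s r ≤ Real.sinh s * (Real.sinh (s / 2) * (s - r)) ^ a :=
        mul_le_mul_of_nonneg_left (Real.rpow_le_rpow_of_nonpos (mul_pos h_sinh_half h_sub)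
          (sinh_half_mul_sub_le_cosh_sub_cosh hr hrs.le) ha.le) h_sinh
    _ = 2 * Real.cosh (s / 2) * Real.sinh (s / 2) ^ (a + 1) * (s - r) ^ a := by
        rw [Real.mul_rpow h_sinh_half.le h_sub.le, Real.rpow_add_one h_sinh_half.ne', h_double]
        ring

-- The factor `sinh s` absorbs the blow-up as `s → 0` that occurs for `a < 0`.
theorem exists_sinh_mul_coshKernel_le {a : ℝ} (ha : -1 ≤ a) (A : ℝ) :
    ∃ C, ∀ ⦃r s : ℝ⦄, 0 ≤ r → r < s → s ≤ A →
      Real.sinh s * coshKernel a s r ≤ C * (s - r) ^ a := by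
  have ha' : 0 ≤ a + 1 := by linarith
  rcases le_or_gt 0 a with ha0 | ha0
  · refine ⟨Real.sinh A ^ (a + 1), fun r s hr hrs hsA => ?_⟩
    refine (sinh_mul_coshKernel_le_of_nonneg ha0 hr hrs.le).trans ?_
    have : 0 ≤ s - r := sub_nonneg.2 hrs.le
    have : 0 ≤ Real.sinh s := Real.sinh_nonneg_iff.2 (hr.trans hrs.le)
    gcongr
    exact Real.sinh_le_sinh.2 hsA
  · refine ⟨2 * Real.cosh (A / 2) * Real.sinh (A / 2) ^ (a + 1), fun r s hr hrs hsA => ?_⟩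
    refine (sinh_mul_coshKernel_le_of_neg ha0 hr hrs).trans ?_
    have hs : 0 ≤ s / 2 := by linarith
    have hsA' : s / 2 ≤ A / 2 := by linarith
    have : 0 ≤ s - r := sub_nonneg.2 hrs.le
    have : 0 ≤ Real.sinh (s / 2) := Real.sinh_nonneg_iff.2 hs
    gcongr
    · exact Real.cosh_le_cosh.2 (abs_le_abs_of_nonneg hs hsA')
    · exact Real.sinh_le_sinh.2 hsA'

theorem intervalIntegrable_sub_rpow {a : ℝ} (ha : -1 < a) (s : ℝ) :
    IntervalIntegrable (fun r => (s - r) ^ a) volume 0 s := by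
  simpa using ((intervalIntegrable_rpow' ha (a := 0) (b := s)).comp_sub_left s).symm

theorem integral_sub_rpow {a : ℝ} (ha : -1 < a) (s : ℝ) :
    ∫ r in (0 : ℝ)..s, (s - r) ^ a = s ^ (a + 1) / (a + 1) := by
  rw [integral_comp_sub_left fun x => x ^ a, sub_self, sub_zero, integral_rpow (Or.inl ha),
    Real.zero_rpow (by linarith), sub_zero]

theorem intervalIntegrable_coshKernel {a s : ℝ} (ha : -1 < a) (hs : 0 ≤ s) :
    IntervalIntegrable (coshKernel a s) volume 0 s := by
  rcases hs.eq_or_lt with rfl | hs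
  · exact IntervalIntegrable.refl
  obtain ⟨C, hC⟩ := exists_sinh_mul_coshKernel_le ha.le s
  have h_sinh : 0 < Real.sinh s := Real.sinh_pos_iff.2 hs
  refine ((intervalIntegrable_sub_rpow ha s).const_mul (C / Real.sinh s)).mono_fun'
    (measurable_coshKernel_comp a measurable_const measurable_id).aestronglyMeasurable ?_
  rw [uIoc_of_le hs.le, ← restrict_Ioo_eq_restrict_Ioc]
  filter_upwards [ae_restrict_mem measurableSet_Ioo] with r hr
  rw [Real.norm_of_nonneg (coshKernel_nonneg a hr.1.le hr.2.le), div_mul_eq_mul_div,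
    le_div_iff₀' h_sinh]
  exact hC hr.1.le hr.2 le_rfl

theorem exists_sinh_mul_integral_coshKernel_le {a : ℝ} (ha : -1 < a) (A : ℝ) :
    ∃ M, ∀ s ∈ Icc 0 A, Real.sinh s * ∫ r in (0 : ℝ)..s, coshKernel a s r ≤ M := by
  obtain ⟨C, hC⟩ := exists_sinh_mul_coshKernel_le ha.le A
  have ha' : 0 < a + 1 := by linarith
  refine ⟨|C| * (A ^ (a + 1) / (a + 1)), fun s hs => ?_⟩
  calc Real.sinh s * ∫ r in (0 : ℝ)..s, coshKernel a s r
      = ∫ r in (0 : ℝ)..s, Real.sinh s * coshKernel a s r :=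
        (intervalIntegral.integral_const_mul _ _).symm
    _ ≤ ∫ r in (0 : ℝ)..s, C * (s - r) ^ a :=
        integral_mono_on_of_le_Ioo hs.1 ((intervalIntegrable_coshKernel ha hs.1).const_mul _)
          ((intervalIntegrable_sub_rpow ha s).const_mul _) fun r hr => hC hr.1.le hr.2 hs.2
    _ = C * (s ^ (a + 1) / (a + 1)) := by
        rw [intervalIntegral.integral_const_mul, integral_sub_rpow ha]
    _ ≤ |C| * (A ^ (a + 1) / (a + 1)) := by
        have := hs.1
        gcongr
        · exact le_abs_self C
        · exact hs.2

theorem measurable_Δ (m₁ m₂ : ℕ) : Measurable (Δ m₁ m₂) := by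
  unfold Δ
  fun_prop

theorem Δ_nonneg (m₁ m₂ : ℕ) {t : ℝ} (ht : 0 ≤ t) : 0 ≤ Δ m₁ m₂ t := by
  have := Real.sinh_nonneg_iff.2 ht
  have := Real.cosh_pos t
  unfold Δ
  positivity

theorem c₀_nonneg (m₁ m₂ : ℕ) : 0 ≤ c₀ m₁ m₂ := by
  have h_Gamma : 0 ≤ Real.Gamma (((m₁ : ℝ) + m₂ + 1 - 1) / 2) :=
    Real.Gamma_nonneg_of_nonneg (by rw [add_sub_cancel_right]; positivity)
  unfold c₀
  positivity

/-- The prefactor `c₀ sinh(2t) / Δ(t)` of the Koornwinder formula. -/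
noncomputable def koornwinderWeight (m₁ m₂ : ℕ) (t : ℝ) : ℝ :=
  c₀ m₁ m₂ * Real.sinh (2 * t) / Δ m₁ m₂ t

theorem measurable_koornwinderWeight (m₁ m₂ : ℕ) : Measurable (koornwinderWeight m₁ m₂) := by
  have := measurable_Δ m₁ m₂
  unfold koornwinderWeight
  fun_prop

theorem koornwinderWeight_nonneg (m₁ m₂ : ℕ) {t : ℝ} (ht : 0 ≤ t) :
    0 ≤ koornwinderWeight m₁ m₂ t :=
  div_nonneg (mul_nonneg (c₀_nonneg m₁ m₂) (Real.sinh_nonneg_iff.2 (by positivity)))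
    (Δ_nonneg m₁ m₂ ht)

theorem neg_one_lt_half_sub_one {m : ℕ} (hm : 1 ≤ m) : (-1 : ℝ) < m / 2 - 1 := by
  have : (1 : ℝ) ≤ m := by exact_mod_cast hm
  linarith

section Transforms

variable {E F : Type*} [NormedAddCommGroup E] [NormedSpace ℝ E]
  [NormedAddCommGroup F] [NormedSpace ℝ F]

/-- The Abel-type transform `s ↦ ∫₀ˢ (cosh s - cosh r) ^ a g(r) dr`, the inner integral of the
Koornwinder formula. -/
noncomputable def coshAbelTransform (a : ℝ) (g : ℝ → E) (s : ℝ) : E :=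
  ∫ r in (0 : ℝ)..s, coshKernel a s r • g r

theorem stronglyMeasurable_coshAbelTransform (a : ℝ) {g : ℝ → E} (hg : StronglyMeasurable g) :
    StronglyMeasurable (coshAbelTransform a g) :=
  stronglyMeasurable_intervalIntegral_zero_left <|
    (measurable_coshKernel_comp a measurable_fst measurable_snd).stronglyMeasurable.smul
      (hg.comp_measurable measurable_snd)

theorem intervalIntegrable_coshKernel_smul {a s : ℝ} (ha : -1 < a) (hs : 0 ≤ s) {g : ℝ → E}
    (hg : Continuous g) : IntervalIntegrable (fun r => coshKernel a s r • g r) volume 0 s :=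
  (intervalIntegrable_coshKernel ha hs).smul_continuousOn hg.continuousOn

theorem map_coshAbelTransform [CompleteSpace E] [CompleteSpace F] {a s : ℝ}
    (ha : -1 < a) (hs : 0 ≤ s) (L : E →L[ℝ] F) {g : ℝ → E} (hg : Continuous g) :
    L (coshAbelTransform a g s) = coshAbelTransform a (fun r => L (g r)) s := by
  rw [coshAbelTransform,
    ← L.intervalIntegral_comp_comm (intervalIntegrable_coshKernel_smul ha hs hg)]
  simp only [map_smul, coshAbelTransform]

theorem norm_coshAbelTransform_le {a s : ℝ} (ha : -1 < a) (hs : 0 ≤ s) {g : ℝ → E} {G : ℝ → ℝ}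
    (hG : Continuous G) (h_le : ∀ r ∈ Ioc 0 s, ‖g r‖ ≤ G r) :
    ‖coshAbelTransform a g s‖ ≤ coshAbelTransform a G s := by
  refine norm_integral_le_of_norm_le hs (.of_forall fun r hr => ?_)
    (intervalIntegrable_coshKernel_smul ha hs hG)
  have h_nonneg := coshKernel_nonneg a hr.1.le hr.2
  rw [norm_smul, Real.norm_of_nonneg h_nonneg, smul_eq_mul]
  exact mul_le_mul_of_nonneg_left (h_le r hr) h_nonneg

theorem exists_norm_sinh_smul_coshAbelTransform_le {a : ℝ} (ha : -1 < a) (t : ℝ) {g : ℝ → E}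
    (hg : Continuous g) :
    ∃ M, ∀ s ∈ Icc 0 t, ‖Real.sinh s • coshAbelTransform a g s‖ ≤ M := by
  obtain ⟨B, hB⟩ := isCompact_Icc.exists_bound_of_continuousOn (s := Icc 0 t) hg.continuousOn
  obtain ⟨M, hM⟩ := exists_sinh_mul_integral_coshKernel_le ha t
  refine ⟨M * |B|, fun s hs => ?_⟩
  have h_sinh : 0 ≤ Real.sinh s := Real.sinh_nonneg_iff.2 hs.1
  have h_bound (r : ℝ) (hr : r ∈ Ioc 0 s) : ‖g r‖ ≤ |B| :=
    (hB r ⟨hr.1.le, hr.2.trans hs.2⟩).trans (le_abs_self B)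
  calc ‖Real.sinh s • coshAbelTransform a g s‖
      = Real.sinh s * ‖coshAbelTransform a g s‖ := norm_smul_of_nonneg h_sinh _
    _ ≤ Real.sinh s * coshAbelTransform a (fun _ => |B|) s :=
        mul_le_mul_of_nonneg_left
          (norm_coshAbelTransform_le ha hs.1 continuous_const h_bound) h_sinh
    _ = (Real.sinh s * ∫ r in (0 : ℝ)..s, coshKernel a s r) * |B| := by
        simp only [coshAbelTransform, smul_eq_mul, intervalIntegral.integral_mul_const, mul_assoc]
    _ ≤ M * |B| := mul_le_mul_of_nonneg_right (hM s hs) (abs_nonneg B)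

theorem intervalIntegrable_coshKernel_smul_sinh_smul_coshAbelTransform {a b t : ℝ} (ha : -1 < a)
    (hb : -1 < b) (ht : 0 ≤ t) {g : ℝ → E} (hg : Continuous g) :
    IntervalIntegrable
      (fun s => coshKernel b (2 * t) (2 * s) • Real.sinh s • coshAbelTransform a g s)
      volume 0 t := by
  obtain ⟨M, hM⟩ := exists_norm_sinh_smul_coshAbelTransform_le ha t hg
  have h_kernel : IntervalIntegrable (fun s => coshKernel b (2 * t) (2 * s)) volume 0 t := by
    simpa using
      (intervalIntegrable_coshKernel hb (by positivity : 0 ≤ 2 * t)).comp_mul_left (c := 2)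
  have h_meas : Measurable fun s => coshKernel b (2 * t) (2 * s) := by fun_prop
  refine (h_kernel.mul_const M).mono_fun' (h_meas.stronglyMeasurable.smul
    (Real.continuous_sinh.stronglyMeasurable.smul
      (stronglyMeasurable_coshAbelTransform a hg.stronglyMeasurable))).aestronglyMeasurable ?_
  rw [uIoc_of_le ht]
  filter_upwards [ae_restrict_mem measurableSet_Ioc] with s hs
  have h_nonneg : 0 ≤ coshKernel b (2 * t) (2 * s) :=
    coshKernel_nonneg b (by linarith [hs.1]) (by linarith [hs.2])
  rw [norm_smul, Real.norm_of_nonneg h_nonneg]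
  exact mul_le_mul_of_nonneg_left (hM s ⟨hs.1.le, hs.2⟩) h_nonneg

/-- The integral transform taking `r ↦ cos (z r)` to the spherical function `φ_z`; the formula
defining `PhiC` with an arbitrary function in place of the cosine. -/
noncomputable def koornwinderTransform (m₁ m₂ : ℕ) (g : ℝ → E) (t : ℝ) : E :=
  koornwinderWeight m₁ m₂ t • ∫ s in (0 : ℝ)..t, coshKernel (m₂ / 2 - 1) (2 * t) (2 * s) •
    Real.sinh s • coshAbelTransform (m₁ / 2 - 1) g s

theorem stronglyMeasurable_koornwinderTransform (m₁ m₂ : ℕ) {g : ℝ → E}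
    (hg : StronglyMeasurable g) : StronglyMeasurable (koornwinderTransform m₁ m₂ g) := by
  have h_kernel : Measurable fun q : ℝ × ℝ => coshKernel (m₂ / 2 - 1) (2 * q.1) (2 * q.2) := by
    fun_prop
  have h_inner : StronglyMeasurable fun s => Real.sinh s • coshAbelTransform (m₁ / 2 - 1) g s :=
    Real.continuous_sinh.stronglyMeasurable.smul (stronglyMeasurable_coshAbelTransform _ hg)
  exact (measurable_koornwinderWeight m₁ m₂).stronglyMeasurable.smul <|
    stronglyMeasurable_intervalIntegral_zero_left <|
    h_kernel.stronglyMeasurable.smul (h_inner.comp_measurable measurable_snd)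

theorem map_koornwinderTransform [CompleteSpace E] [CompleteSpace F]
    {m₁ m₂ : ℕ} (hm₁ : 1 ≤ m₁) (hm₂ : 1 ≤ m₂) (L : E →L[ℝ] F) {g : ℝ → E} (hg : Continuous g)
    {t : ℝ} (ht : 0 ≤ t) :
    L (koornwinderTransform m₁ m₂ g t) = koornwinderTransform m₁ m₂ (fun r => L (g r)) t := by
  have ha := neg_one_lt_half_sub_one hm₁
  have hb := neg_one_lt_half_sub_one hm₂
  rw [koornwinderTransform, map_smul, ← L.intervalIntegral_comp_comm
    (intervalIntegrable_coshKernel_smul_sinh_smul_coshAbelTransform ha hb ht hg),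
    koornwinderTransform]
  congr 1
  refine integral_congr fun s hs => ?_
  rw [uIcc_of_le ht] at hs
  simp only [map_smul, map_coshAbelTransform ha hs.1 L hg]

theorem norm_koornwinderTransform_le {m₁ m₂ : ℕ} (hm₁ : 1 ≤ m₁) (hm₂ : 1 ≤ m₂) {g : ℝ → E}
    {G : ℝ → ℝ} (hG : Continuous G) {t : ℝ} (ht : 0 ≤ t) (h_le : ∀ r ∈ Ioc 0 t, ‖g r‖ ≤ G r) :
    ‖koornwinderTransform m₁ m₂ g t‖ ≤ koornwinderTransform m₁ m₂ G t := by
  have ha := neg_one_lt_half_sub_one hm₁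
  have hb := neg_one_lt_half_sub_one hm₂
  have h_weight := koornwinderWeight_nonneg m₁ m₂ ht
  rw [koornwinderTransform, norm_smul_of_nonneg h_weight, koornwinderTransform, smul_eq_mul]
  refine mul_le_mul_of_nonneg_left (norm_integral_le_of_norm_le ht (.of_forall fun s hs => ?_)
    (intervalIntegrable_coshKernel_smul_sinh_smul_coshAbelTransform ha hb ht hG)) h_weight
  have h_kernel : 0 ≤ coshKernel (m₂ / 2 - 1) (2 * t) (2 * s) :=
    coshKernel_nonneg _ (by linarith [hs.1]) (by linarith [hs.2])
  have h_sinh : 0 ≤ Real.sinh s := Real.sinh_nonneg_iff.2 hs.1.le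
  rw [norm_smul_of_nonneg h_kernel, norm_smul_of_nonneg h_sinh, smul_eq_mul, smul_eq_mul]
  gcongr
  exact norm_coshAbelTransform_le ha hs.1.le hG fun r hr => h_le r ⟨hr.1, hr.2.trans hs.2⟩

end Transforms

theorem PhiC_eq_koornwinderTransform (m₁ m₂ : ℕ) (z : ℂ) :
    PhiC m₁ m₂ z = koornwinderTransform m₁ m₂ fun r => Complex.cos (z * r) := by
  ext t
  simp only [PhiC, koornwinderTransform, koornwinderWeight, coshAbelTransform, coshKernel,
    Complex.real_smul]
  congr! 3
  ring

theorem Psi_eq_koornwinderTransform (m₁ m₂ : ℕ) (p : ENNReal) (lam : ℝ) :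
    Psi m₁ m₂ p lam = koornwinderTransform m₁ m₂ fun r =>
      Real.cos (lam * r) * Real.cosh (rhoP m₁ m₂ p * r) := by
  ext t
  simp only [Psi, koornwinderTransform, koornwinderWeight, coshAbelTransform, coshKernel,
    smul_eq_mul]
  congr! 3
  ring

theorem stronglyMeasurable_PhiC (m₁ m₂ : ℕ) (z : ℂ) : StronglyMeasurable (PhiC m₁ m₂ z) := by
  rw [PhiC_eq_koornwinderTransform]
  exact stronglyMeasurable_koornwinderTransform m₁ m₂
    (by fun_prop : Continuous fun r : ℝ => Complex.cos (z * r)).stronglyMeasurable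

theorem re_PhiC {m₁ m₂ : ℕ} (hm₁ : 1 ≤ m₁) (hm₂ : 1 ≤ m₂) (z : ℂ) {t : ℝ} (ht : 0 ≤ t) :
    (PhiC m₁ m₂ z t).re = koornwinderTransform m₁ m₂
      (fun r => Real.cos (z.re * r) * Real.cosh (z.im * r)) t := by
  rw [PhiC_eq_koornwinderTransform, ← Complex.reCLM_apply,
    map_koornwinderTransform hm₁ hm₂ _ (by fun_prop) ht]
  simp only [Complex.reCLM_apply, re_cos_eq_cos_re_mul_cosh_im, Complex.re_mul_ofReal,
    Complex.im_mul_ofReal]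

theorem norm_PhiC_le_re_PhiC {m₁ m₂ : ℕ} (hm₁ : 1 ≤ m₁) (hm₂ : 1 ≤ m₂) (z : ℂ) {t : ℝ}
    (ht : 0 ≤ t) : ‖PhiC m₁ m₂ z t‖ ≤ (PhiC m₁ m₂ (Complex.I * z.im) t).re := by
  rw [re_PhiC hm₁ hm₂ _ ht, PhiC_eq_koornwinderTransform]
  refine norm_koornwinderTransform_le hm₁ hm₂ (by fun_prop) ht fun r _ => ?_
  simpa using norm_cos_le_cosh_im (z * r)

theorem integrable_mul_PhiC_mul_Δ {m₁ m₂ : ℕ} (hm₁ : 1 ≤ m₁) (hm₂ : 1 ≤ m₂) {μ : Measure ℝ}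
    (hμ : ∀ᵐ t ∂μ, 0 < t) {f : ℝ → ℝ} (hf : AEStronglyMeasurable f μ) (hf0 : 0 ≤ᵐ[μ] f) {z : ℂ}
    (hint : Integrable
      (fun t => f t * (PhiC m₁ m₂ (Complex.I * z.im) t).re * Δ m₁ m₂ t) μ) :
    Integrable (fun t => (f t : ℂ) * PhiC m₁ m₂ z t * (Δ m₁ m₂ t : ℝ)) μ := by
  refine hint.mono' (((Complex.continuous_ofReal.comp_aestronglyMeasurable hf).mul
    (stronglyMeasurable_PhiC m₁ m₂ z).aestronglyMeasurable).mul
    (measurable_Δ m₁ m₂).complex_ofReal.aestronglyMeasurable) ?_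
  filter_upwards [hμ, hf0] with t ht hft
  have hft' : 0 ≤ f t := hft
  have hΔ := Δ_nonneg m₁ m₂ ht.le
  rw [norm_mul, norm_mul, Complex.norm_of_nonneg hft', Complex.norm_of_nonneg hΔ]
  gcongr
  exact norm_PhiC_le_re_PhiC hm₁ hm₂ z ht.le

theorem stmt7_general {m₁ m₂ : ℕ} (hm₁ : 1 ≤ m₁) (hm₂ : 1 ≤ m₂) {μ : Measure ℝ}
    (hμ : ∀ᵐ t ∂μ, 0 < t) {f : ℝ → ℝ} (hf : AEStronglyMeasurable f μ) (hf0 : 0 ≤ᵐ[μ] f) {σ : ℝ}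
    (hint : Integrable (fun t => f t * (PhiC m₁ m₂ (Complex.I * σ) t).re * Δ m₁ m₂ t) μ)
    (lam : ℝ) :
    ∫ t, f t * koornwinderTransform m₁ m₂
        (fun r => Real.cos (lam * r) * Real.cosh (σ * r)) t * Δ m₁ m₂ t ∂μ
      ≤ ‖∫ t, (f t : ℂ) * PhiC m₁ m₂ (lam + Complex.I * σ) t * (Δ m₁ m₂ t : ℝ) ∂μ‖ := by
  have h_re : ((lam : ℂ) + Complex.I * σ).re = lam := by simp
  have h_im : ((lam : ℂ) + Complex.I * σ).im = σ := by simp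
  refine le_of_eq_of_le (.trans (integral_congr_ae ?_) (Complex.reCLM.integral_comp_comm
    (integrable_mul_PhiC_mul_Δ hm₁ hm₂ hμ hf hf0 (by rwa [h_im])))) (Complex.re_le_norm _)
  filter_upwards [hμ] with t ht
  rw [Complex.reCLM_apply, Complex.re_mul_ofReal, Complex.re_ofReal_mul,
    re_PhiC hm₁ hm₂ _ ht.le, h_re, h_im]

/-- For a non-negative radial `f` supported in `(0, α]` and any real `λ`,
`|∫₀^α f(t) Φ(λ + iρ_p, t) Δ(t) dt| ≥ ∫₀^α f(t) Ψ_p(λ, t) Δ(t) dt`. -/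
theorem stmt7 (m₁ m₂ : ℕ) (hm₁ : 1 ≤ m₁) (hm₂ : 1 ≤ m₂)
    (p : ENNReal) (hp : 1 ≤ p) (α : ℝ) (hα : 0 < α)
    (f : ℝ → ℝ) (hf : Measurable f) (hf0 : ∀ t, 0 ≤ f t)
    (hsupp : ∀ t, t ∉ Ioc (0:ℝ) α → f t = 0)
    (hint : IntegrableOn
      (fun t => f t * (PhiC m₁ m₂ (Complex.I * (rhoP m₁ m₂ p : ℝ)) t).re * Δ m₁ m₂ t)
      (Ioc 0 α)) :
    ∀ lam : ℝ,
      ∫ t in Ioc (0:ℝ) α, f t * Psi m₁ m₂ p lam t * Δ m₁ m₂ t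
        ≤ ‖∫ t in Ioc (0:ℝ) α,
            (f t : ℂ) * PhiC m₁ m₂ ((lam : ℂ) + Complex.I * (rhoP m₁ m₂ p : ℝ)) t *
              (Δ m₁ m₂ t : ℝ)‖ := by
  intro lam
  simpa only [Psi_eq_koornwinderTransform] using stmt7_general hm₁ hm₂
    (ae_restrict_of_forall_mem measurableSet_Ioc fun t ht => ht.1) hf.aestronglyMeasurable
    (.of_forall hf0) hint lam
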